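/- Let s and r be positive integers with s/r < 4 and gcd(s,r) = 1. (1) If r ≤ 8, then s/r is a relation number. (2) If s ≤ 30 and s/r ≥ 1/10, then s/r is a relation number. -/

import Mathlib

/-- `a = [[1,0],[1,1]]` as an element of `SL(2, ℂ)`. -/
def matA : Matrix.SpecialLinearGroup (Fin 2) ℂ :=
  ⟨!![1, 0; 1, 1], by simp [Matrix.det_fin_two_of]⟩

/-- `b_q = [[1,q],[0,1]]` as an element of `SL(2, ℂ)`. -/
def matB (q : ℂ) : Matrix.SpecialLinearGroup (Fin 2) ℂ :=
  ⟨!![1, q; 0, 1], by simp [Matrix.det_fin_two_of]⟩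

/-- `q` is a relation number: the homomorphism `F₂ → SL(2,ℂ)`, `x ↦ a`, `y ↦ b_q`,
is not injective. -/
def IsRelationNumber (q : ℂ) : Prop :=
  ¬ Function.Injective
    (FreeGroup.lift (fun i : Bool => if i then matA else matB q) :
      FreeGroup Bool →* Matrix.SpecialLinearGroup (Fin 2) ℂ)

/-- `q` is an `ℓ`-step relation number: there are `k ≤ ℓ` and nonzero integers
`m_1, …, m_{2k+1}` with `b_q^{m_1} a^{m_2} ⋯ b_q^{m_{2k+1}}` lower triangular. -/
def IsStepRelationNumber (ℓ : ℕ) (q : ℂ) : Prop :=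
  ∃ k : ℕ, k ≤ ℓ ∧ ∃ m : Fin (2 * k + 1) → ℤ, (∀ i, m i ≠ 0) ∧
    ((List.ofFn (fun i : Fin (2 * k + 1) =>
      (if (i : ℕ) % 2 = 0 then matB q else matA) ^ (m i))).prod).val 0 1 = 0

/-- The residue class `w + smℤ` is `s`-good with good representative `w`. -/
def IsGoodRep (s w m : ℤ) : Prop :=
  ∃ y : ℤ, y * (Int.gcd w (s * m) : ℤ) ∣ m * (Int.gcd w s : ℤ) ∧
    (w ∣ s * m * y + (Int.gcd w (s * m) : ℤ) ∨ w ∣ s * m * y - (Int.gcd w (s * m) : ℤ))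

/-!
Suppose a word `w = ⋯ y^{n₁} x^{m₁}` with nonzero exponents becomes upper triangular at `q`. Then
`w y w⁻¹` is mapped to a matrix fixing the same line as `b_q`, so it commutes with `b_q`. If the
representation were faithful, `w y w⁻¹` and `y` would commute in the free group, hence also in the
representation at `q' = 4`; but there ping-pong between `|X| ≥ 2|Y|` and `|X| ≤ 2|Y|` shows that the
lower-left entry of `w` is nonzero, which makes the commutator nontrivial.

A triangular word at `k q`, with `k` a nonzero integer, yields one at `q` by multiplying the
exponents of `b` by `k`; so a word for `s / e` serves every `s / r` with `e ∣ r`. Most of the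
rationals in question have a triangular word of seven letters, obtained from one divisibility
condition, and the others come in this way from `98` words found by computer search.
-/

open Matrix.SpecialLinearGroup (coe_mul coe_inv)
open scoped MatrixGroups

section Words

variable {R S : Type*} [CommRing R] [CommRing S]

/-- The second coordinate of the image of the column vector `(X, Y)` under the word
`⋯ b_q^{n₁} a^{m₁}` whose exponents, read from the right, are `[m₁, n₁, m₂, n₂, …]`. At `(1, 0)` it
is the lower-left entry of the word. -/
def sndCoord (q : R) : List ℤ → R → R → R
  | [], _, Y => Y
  | [m], X, Y => Y + m * X
  | m :: n :: l, X, Y => sndCoord q l (X + n * q * (Y + m * X)) (Y + m * X)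

/-- Some nonempty alternating word in `a` and `b_q`, starting on the right with a power of `a` and
with all exponents nonzero, is upper triangular. -/
def HasTriangularWord (q : R) : Prop :=
  ∃ l : List ℤ, l ≠ [] ∧ (∀ m ∈ l, m ≠ 0) ∧ sndCoord q l 1 0 = 0

theorem map_sndCoord (f : R →+* S) (q : R) (l : List ℤ) (X Y : R) :
    f (sndCoord q l X Y) = sndCoord (f q) l (f X) (f Y) := by
  fun_induction sndCoord q l X Y with
  | case1 => rfl
  | case2 => simp [sndCoord]
  | case3 m n l X Y ih => simpa [sndCoord] using ih

theorem HasTriangularWord.map {q : R} (h : HasTriangularWord q) (f : R →+* S) :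
    HasTriangularWord (f q) := by
  obtain ⟨l, hne, hl, hq⟩ := h
  exact ⟨l, hne, hl, by simpa [hq] using (map_sndCoord f q l 1 0).symm⟩

/-- Multiplies by `k` every second entry of the exponent list, that is, the exponents of `b`. -/
def scaleSnd (k : ℤ) : List ℤ → List ℤ
  | [] => []
  | [m] => [m]
  | m :: n :: l => m :: k * n :: scaleSnd k l

theorem scaleSnd_eq_nil_iff {k : ℤ} {l : List ℤ} : scaleSnd k l = [] ↔ l = [] := by
  fun_cases scaleSnd k l <;> simp

theorem ne_zero_of_mem_scaleSnd {k : ℤ} (hk : k ≠ 0) {l : List ℤ} (hl : ∀ m ∈ l, m ≠ 0) :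
    ∀ m ∈ scaleSnd k l, m ≠ 0 := by
  fun_induction scaleSnd k l with
  | case1 => exact hl
  | case2 => exact hl
  | case3 m n l ih => simp_all

theorem sndCoord_scaleSnd (k : ℤ) (q : R) (l : List ℤ) (X Y : R) :
    sndCoord q (scaleSnd k l) X Y = sndCoord (k * q) l X Y := by
  fun_induction sndCoord (k * q) l X Y with
  | case1 => rfl
  | case2 => rfl
  | case3 m n l X Y ih =>
    rw [← ih, scaleSnd, sndCoord]
    congr 2
    push_cast
    ring

theorem HasTriangularWord.of_intCast_mul {q : R} {k : ℤ} (hk : k ≠ 0)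
    (h : HasTriangularWord (k * q)) : HasTriangularWord q := by
  obtain ⟨l, hne, hl, hq⟩ := h
  exact ⟨scaleSnd k l, scaleSnd_eq_nil_iff.not.mpr hne, ne_zero_of_mem_scaleSnd hk hl,
    (sndCoord_scaleSnd k q l 1 0).trans hq⟩

theorem HasTriangularWord.div_of_dvd {K : Type*} [Field K] [CharZero K] {s : K} {e r : ℕ}
    (h : HasTriangularWord (s / e)) (her : e ∣ r) (hr : r ≠ 0) : HasTriangularWord (s / r) := by
  obtain ⟨k, rfl⟩ := her
  have hk : k ≠ 0 := right_ne_zero_of_mul hr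
  refine .of_intCast_mul (k := k) (mod_cast hk) ?_
  convert h using 1
  have hkK : (k : K) ≠ 0 := mod_cast hk
  push_cast
  field_simp

end Words

section PingPong

theorem norm_le_two_mul_norm_add_intCast_mul {m : ℤ} (hm : m ≠ 0) {X Y : ℂ}
    (h : 2 * ‖Y‖ ≤ ‖X‖) : ‖X‖ ≤ 2 * ‖Y + m * X‖ := by
  have hmX : ‖X‖ ≤ ‖m * X‖ := by
    rw [norm_mul, Complex.norm_intCast]
    exact le_mul_of_one_le_left (norm_nonneg X) (mod_cast Int.one_le_abs hm)
  have triangle : ‖m * X‖ ≤ ‖Y + m * X‖ + ‖Y‖ := by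
    simpa using norm_sub_le (Y + m * X) Y
  linarith

theorem two_mul_norm_le_norm_add_intCast_mul_mul {n : ℤ} (hn : n ≠ 0) {q X Y : ℂ}
    (hq : 4 ≤ ‖q‖) (h : ‖X‖ ≤ 2 * ‖Y‖) : 2 * ‖Y‖ ≤ ‖X + n * q * Y‖ := by
  have hqY : 4 * ‖Y‖ ≤ ‖q * Y‖ := by
    rw [norm_mul]
    gcongr
  have := norm_le_two_mul_norm_add_intCast_mul hn (X := q * Y) (Y := X) (by linarith)
  rw [← mul_assoc] at this
  linarith

theorem sndCoord_ne_zero {q X Y : ℂ} (hq : 4 ≤ ‖q‖) {l : List ℤ} (hne : l ≠ [])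
    (hl : ∀ m ∈ l, m ≠ 0) (hX : 0 < ‖X‖) (hXY : 2 * ‖Y‖ ≤ ‖X‖) : sndCoord q l X Y ≠ 0 := by
  fun_induction sndCoord q l X Y with
  | case1 => exact absurd rfl hne
  | case2 m X Y =>
    have := norm_le_two_mul_norm_add_intCast_mul (hl m (by simp)) hXY
    exact norm_pos_iff.mp (by linarith)
  | case3 m n l X Y ih =>
    have hY := norm_le_two_mul_norm_add_intCast_mul (hl m (by simp)) hXY
    have hX' := two_mul_norm_le_norm_add_intCast_mul_mul (hl n (by simp)) hq hY
    rcases eq_or_ne l [] with rfl | hl'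
    · exact norm_pos_iff.mp (by rw [sndCoord]; linarith)
    · exact ih hl' (fun k hk ↦ hl k (by simp [hk])) (by linarith) hX'

end PingPong

section Representation

theorem coe_matA : (matA : Matrix (Fin 2) (Fin 2) ℂ) = !![1, 0; 1, 1] := rfl

theorem coe_matB (q : ℂ) : (matB q : Matrix (Fin 2) (Fin 2) ℂ) = !![1, q; 0, 1] := rfl

theorem coe_matA_zpow (n : ℤ) :
    ((matA ^ n : SL(2, ℂ)) : Matrix (Fin 2) (Fin 2) ℂ) = !![1, 0; (n : ℂ), 1] := by
  induction n using Int.induction_on with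
  | zero => simp [Matrix.one_fin_two]
  | succ n ih =>
    rw [zpow_add_one, coe_mul, ih, coe_matA]
    simp
  | pred n ih =>
    rw [zpow_sub_one, coe_mul, ih, coe_inv, coe_matA]
    simp [Matrix.adjugate_fin_two_of, sub_eq_add_neg]

theorem coe_matB_zpow (q : ℂ) (n : ℤ) :
    ((matB q ^ n : SL(2, ℂ)) : Matrix (Fin 2) (Fin 2) ℂ) = !![1, n * q; 0, 1] := by
  induction n using Int.induction_on with
  | zero => simp [Matrix.one_fin_two]
  | succ n ih =>
    rw [zpow_add_one, coe_mul, ih, coe_matB]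
    simp [add_mul, add_comm]
  | pred n ih =>
    rw [zpow_sub_one, coe_mul, ih, coe_inv, coe_matB]
    simp [Matrix.adjugate_fin_two_of, sub_eq_add_neg, add_mul, add_comm]

/-- The homomorphism `F₂ → SL(2, ℂ)`, `x ↦ a`, `y ↦ b_q`, whose injectivity is in question; the
generators `x` and `y` are `true` and `false`. -/
abbrev parabolicHom (q : ℂ) : FreeGroup Bool →* SL(2, ℂ) :=
  FreeGroup.lift (fun i : Bool => if i then matA else matB q)

/-- The word `⋯ y^{n₁} x^{m₁}` with exponent list `[m₁, n₁, m₂, n₂, …]`, of which `sndCoord`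
computes the second row. -/
def alternatingWord : List ℤ → FreeGroup Bool
  | [] => 1
  | [m] => .of true ^ m
  | m :: n :: l => alternatingWord l * (.of false ^ n * .of true ^ m)

theorem sndCoord_eq_parabolicHom (q : ℂ) (l : List ℤ) (X Y : ℂ) :
    sndCoord q l X Y =
      parabolicHom q (alternatingWord l) 1 0 * X + parabolicHom q (alternatingWord l) 1 1 * Y := by
  fun_induction sndCoord q l X Y with
  | case1 => simp [alternatingWord]
  | case2 m X Y => simp [alternatingWord, coe_matA_zpow, add_comm]
  | case3 m n l X Y ih =>
    have map_word : parabolicHom q (alternatingWord (m :: n :: l)) =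
        parabolicHom q (alternatingWord l) * (matB q ^ n * matA ^ m) := by
      simp [alternatingWord]
    rw [ih, map_word, coe_mul, coe_mul, coe_matA_zpow, coe_matB_zpow]
    simp only [Matrix.mul_apply, Fin.sum_univ_two, Matrix.of_apply, Matrix.cons_val',
      Matrix.cons_val_zero, Matrix.cons_val_one, Matrix.cons_val_fin_one]
    ring

theorem coe_conj_matB (q : ℂ) (M : SL(2, ℂ)) :
    ((M * matB q * M⁻¹ : SL(2, ℂ)) : Matrix (Fin 2) (Fin 2) ℂ) =
      !![1 - q * M 0 0 * M 1 0, q * M 0 0 ^ 2; -(q * M 1 0 ^ 2), 1 + q * M 0 0 * M 1 0] := by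
  have hdet : M 0 0 * M 1 1 - M 0 1 * M 1 0 = 1 := by rw [← Matrix.det_fin_two, M.det_coe]
  rw [coe_mul, coe_mul, coe_inv, coe_matB, Matrix.adjugate_fin_two]
  ext i j
  fin_cases i <;> fin_cases j <;>
    simp only [Matrix.mul_apply, Fin.sum_univ_two, Matrix.of_apply, Matrix.cons_val',
      Matrix.cons_val_zero, Matrix.cons_val_one, Matrix.cons_val_fin_one, Fin.zero_eta, Fin.mk_one]
  · linear_combination hdet
  · ring
  · ring
  · linear_combination hdet

theorem commute_conj_matB_iff {q : ℂ} {M : SL(2, ℂ)} :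
    Commute (M * matB q * M⁻¹) (matB q) ↔ q = 0 ∨ M 1 0 = 0 := by
  refine Subtype.ext_iff.trans ?_
  rw [coe_mul, coe_mul (matB q), coe_conj_matB, coe_matB]
  constructor
  · intro h
    have h00 := congrFun₂ h 0 0
    simpa [Matrix.mul_apply, Fin.sum_univ_two] using h00
  · rintro (rfl | hM)
    · simp
    · simp [hM, add_comm]

theorem isRelationNumber_of_lowerLeft_eq_zero {q q' : ℂ} (hq' : q' ≠ 0) {w : FreeGroup Bool}
    (hw : parabolicHom q w 1 0 = 0) (hw' : parabolicHom q' w 1 0 ≠ 0) :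
    IsRelationNumber q := by
  intro (hinj : Function.Injective (parabolicHom q))
  have map_conj (p : ℂ) : parabolicHom p (w * .of false * w⁻¹) =
      parabolicHom p w * matB p * (parabolicHom p w)⁻¹ := by simp
  have map_y (p : ℂ) : parabolicHom p (.of false) = matB p := by simp
  have hcomm : Commute (w * .of false * w⁻¹) (.of false) := by
    refine .of_map hinj ?_
    rw [map_conj, map_y]
    exact commute_conj_matB_iff.mpr (.inr hw)
  have hcomm' := hcomm.map (parabolicHom q')
  rw [map_conj, map_y, commute_conj_matB_iff] at hcomm'
  exact hcomm'.elim hq' hw'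

theorem HasTriangularWord.isRelationNumber {q : ℂ} (h : HasTriangularWord q) :
    IsRelationNumber q := by
  obtain ⟨l, hne, hl, hq⟩ := h
  have lowerLeft_eq (p : ℂ) : parabolicHom p (alternatingWord l) 1 0 = sndCoord p l 1 0 := by
    rw [sndCoord_eq_parabolicHom, mul_one, mul_zero, add_zero]
  have sndCoord_four : sndCoord (4 : ℂ) l 1 0 ≠ 0 :=
    sndCoord_ne_zero (by simp) hne hl (by simp) (by simp)
  exact isRelationNumber_of_lowerLeft_eq_zero (q' := 4) (by norm_num) ((lowerLeft_eq q).trans hq)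
    ((lowerLeft_eq 4).trans_ne sndCoord_four)

end Representation

section SevenLetterWords

/-- The condition under which the seven-letter word `a^z b^x a^{-y} b^n a^{-z} b^{-x} a^y` can be
made upper triangular at `q = s / r` by the choice of `n`, the quotient in the divisibility. -/
def IsGoodTriple (s r x y z : ℤ) : Prop :=
  (y - z) * r + x * y * z * s ∣ r * x * (y + z) ∧ x ≠ 0 ∧ y ≠ 0 ∧ z ≠ 0 ∧ y + z ≠ 0

instance (s r x y z : ℤ) : Decidable (IsGoodTriple s r x y z) :=
  inferInstanceAs (Decidable (_ ∧ _))

theorem hasTriangularWord_of_mul_eq {R : Type*} [CommRing R] {q : R} {x y z n : ℤ} (hx : x ≠ 0)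
    (hy : y ≠ 0) (hz : z ≠ 0) (hn : n ≠ 0) (h : n * (y - z + q * x * y * z) = x * (y + z)) :
    HasTriangularWord q := by
  refine ⟨[y, -x, -z, n, -y, x, z], by simp, by simp [*], ?_⟩
  simp only [sndCoord]
  push_cast
  linear_combination (-q * (y - z + q * x * y * z)) * h

theorem IsGoodTriple.hasTriangularWord {K : Type*} [Field K] [CharZero K] {s r x y z : ℤ}
    (h : IsGoodTriple s r x y z) (hr : r ≠ 0) : HasTriangularWord (s / r : K) := by
  obtain ⟨⟨n, hn⟩, hx, hy, hz, hyz⟩ := h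
  have hn0 : n ≠ 0 := by
    rintro rfl
    simp [hr, hx, hyz] at hn
  refine hasTriangularWord_of_mul_eq hx hy hz hn0 ?_
  have hrK : (r : K) ≠ 0 := Int.cast_ne_zero.mpr hr
  have hnK : (r * x * (y + z) : K) = ((y - z) * r + x * y * z * s) * n := mod_cast hn
  field_simp
  linear_combination -hnK

end SevenLetterWords

/-- Pairs `(e, l)` where `l` is the exponent list of a triangular word at `s / e`, found by computer
search; the denominators `e` are ones at which the search for seven-letter words fails. -/
def exceptionalWords : ℕ → List (ℕ × List ℤ)
  | 3 => [(1, [1, -1, 1, -1, 1])]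
  | 5 => [(2, [2, 1, -1, 1, -1])]
  | 7 => [(2, [2, -1, 1, -1, 1, -1, 1, -1, 2]), (3, [3, -1, 1, -1, 3])]
  | 8 => [(3, [3, 1, -1, 1, -1, 3, -1])]
  | 9 => [(4, [2, 2, -1, 1, -1]), (5, [1, -1, 1, 2, 5, 2, 1, -1, 1])]
  | 10 => [(3, [3, -1, 1, -1, 1, -1, 1, -3, 1, -1, 3])]
  | 11 => [(3, [3, -2, 1, -1, 1, -1, 1, -1, 1, -1, 1, -2, 3]), (4, [2, -2, 1, -1, 1, -1, -4]),
      (5, [1, -1, 1, -3, 2, -1, -1, -2, 2, 1, -5])]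
  | 12 => [(5, [1, -1, 1, -1, -1, 5, -1]), (7, [1, -1, 2, -1, 21])]
  | 13 => [(4, [1, 2, -2, 1, -1, 1, -1, 1, -1, -1, 4]), (5, [1, -1, 1, -1, -15]),
      (6, [2, 3, -1, 1, -1]), (7, [1, -1, 1, 3, 2, 2, -2, 1, -5, -2, -4, 1, 7])]
  | 14 => [(5, [1, -1, 1, -1, 2, -2, 10])]
  | 15 => [(4, [2, -2, 3, -1, 1, -1, 1, -1, 1, -1, 1, -1, 1, -1, 3, -2, 2]),
      (7, [1, -1, 1, -4, 2, -2, 3, 1, -7])]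
  | 16 => [(5, [1, -1, 1, -1, 1, -1, -2, 3, 15]), (7, [1, -1, 1, -2, 14]),
      (9, [3, -3, -1, 1, -1, -9, -1])]
  | 17 => [(5, [1, -5, 1, -1, 1, -1, 1, -1, 1, 2, -2, 1, 3, 2, -1, 1, 1, 4, 5, 4, 1, 1, -1, 2, 3, 1,
        -2, 2, 1, -1, 1, -1, 1, -1, 1, -5, 1]), (6, [3, -1, 1, -2, 1, 2, -1, 1, -1, 1, -3]),
      (7, [1, -1, 1, -1, -1, -4, 7, -1, 1, -1, 7, -4, -1, -1, 1, -1, 1]), (8, [2, 4, -1, 1, -1]),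
      (9, [1, -1, 1, 4, 2, 2, 6, -3, 2, -1, 3, 4, 1, -1, 1])]
  | 18 => [(5, [1, -1, 1, -1, 1, -1, 1, -1, 1, 2, -1, 3, -1, -1, -1, 7, 6, -1, 10]),
      (7, [1, -1, 1, -1, -6, 1, -14]), (11, [1, -1, 1, 1, 9, -3, -11])]
  | 19 => [(5, [3, 5, -1, 7, -1, 1, -1, 4, -1, 2, -1, 4, -1, -1, 1, -1, 1, -1, 1, -1, 1, -1, 1, -1,
        1, -1, 2, 1, -6, 7, -43, -1, 1, 1, 5]),
      (6, [2, 9, 1, -1, 1, -1, 1, -1, -1, -1, -1, 1, -1, -9, -2]), (7, [1, -1, 1, -1, 3, 2, 14]),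
      (8, [2, -4, 1, -1, 1, -2, -4]), (9, [1, -1, 1, -5, 2, -3, 1, -2, 4, 1, -9]),
      (11, [1, -1, 2, -1, 8, -4, -11])]
  | 20 => [(7, [1, -1, 1, -1, 1, 1, -2, 1, -3, 1, -12, 2, 1, 1, 1, 2, -1, 1, 3, 1, -6, -1, 9, 1,
        7]), (9, [3, 3, -1, 1, -1, 9, -1]), (11, [1, -1, 1, 3, -1, -11, -1])]
  | 21 => [(8, [1, -1, 1, -1, 40]), (10, [2, 5, -1, 1, -1]),
      (11, [1, -11, -1, 1, -1, -11, -1, 11, 1, -1, 1]), (13, [1, -1, 1, 1, -65]),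
      (29, [1, -1, -5, 1, 319])]
  | 22 => [(7, [1, -1, 1, -1, 1, -2, 1, -1, 3, 43, -7]),
      (9, [3, -3, 1, -1, 1, -2, 3, 1, -4, 1, 18]), (13, [1, -1, 2, -1, -8, -13, 1, -1, 3, -1, 1])]
  | 23 => [(6, [3, 2, -1, -6, 1, 1, 3, -1, -1, 1, -3, 1, -1, 1, -1, 1, -1, 1, -1, 1, -1, 1, -1, 1,
        -1, 11, -1, -1, 1, -1, -4, 4, 3, -1, 6]),
      (7, [1, -1, 1, -1, 1, -1, 3, 2, -9, 1, -1, 9, -2, 1, 1, 1, -1, -1, -3, 1, -2, 1, -1, -1, 1,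
        -3, -1, -1, -91, -1, -1, -3, 1, -1, -1, 1, -2, 1, -3, -1, -1, 1, 1, 1, -2, 9, -1, 1, -9, 2,
        3, -1, 1, -1, 1, -1, 1]), (8, [1, -1, 1, -1, 1, 1, -7, -6, 4]),
      (9, [3, 3, 1, -1, 1, -1, 18]), (10, [2, -1, 1, -1, 20]),
      (11, [1, -1, 1, -6, 2, -3, 4, -1, -1, -5, 2, 3, -1, 2, 2, 11, 3, 2, 1, 2, 2, -5, -1, -1, 4,
        -3, 2, -6, 1, -1, 1]),
      (13, [1, -1, 1, 2, -5, 5, -1, -3, -5, -3, 3, 2, 2, 3, 2, -1, -65, -1, 2, 3, 2, 2, 3, -3, -5,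
        -3, -1, 5, -5, 2, 1, -1, 1])]
  | 24 => [(7, [1, -7, -3, 1, -1, 1, -1, 1, -1, 1, 5, -1, 7, 1, -7]), (11, [1, -1, 1, -3, 22]),
      (13, [1, -1, 1, 3, -26]), (17, [1, -1, 3, -1, -3, 17, -1]), (31, [1, -1, -5, 2, 5, -31, -1])]
  | 25 => [(7, [1, -1, 1, -1, 1, -1, 1, -1, 2, -1, -12, -1, 1, -1, 1, -3, -4, -1, 3, -1, 1, -1, 3,
        -21, -3, 1, -1, 1, 1, -1, 1, 14, 3]), (8, [1, -1, 1, -1, 1, -2, 1, -22, -4]),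
      (9, [1, -1, 1, -1, 2, 12, -1, 1, -1, 13, 1, 3, -3]),
      (11, [1, -1, 1, -2, -8, -2, 2, -3, 1, 2, -22]), (12, [2, 6, -1, 1, -1]),
      (13, [1, -1, 1, 6, 2, 3, 4, 1, 1, -7, -2, 4, -2, 1, -8, -13, -3, -1, -1, 4, -2, -7, 1, 1, 4,
        3, 2, 6, 1, -1, 1])]
  | 26 => [(7, [1, 7, 1, -1, 1, -1, 1, -1, 1, -1, 1, -1, 1, 1, 3, 3, -3, -3, 1, 2, -1, -1, 1, -9,
        -1, -1, -1, -2, -3, -2, -1, 1, -1, -7, -1]), (9, [1, -1, 1, -1, 1, 1, 3, -3, -6]),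
      (11, [2, -1, 1, -1, 5, -3, -13, -2, -4, 1, 2, -1, 33]), (15, [3, -1, -1, 1, -1, 5, -1])]
  | 27 => [(7, [2, 7, -2, -7, -3, -7, 1, -1, 1, -1, 1, -1, 1, -1, 1, -1, 1, -1, 1, -1, 1, -2, 1, -1,
        2, -3, -6, -3, -1, 2, -1, 1, -4, 1, -14, -2, -1, 17, -1, 1, -1, 3, -1, 1, 1, -1, -17, 1, 1,
        -2, -7, -2, 1, 1, -17, -1, 1, 1, -1, 3, -1, 1, -1, 17, -1, -2, -14, 1, -4, 1, -1, 2, -1, -3,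
        -6, -3, 2, -1, 1, -2, 1, -1, 1, -1, 1, -1, 1, -1, 1, -1, 1, -1, 1, -1, 1, -7, -3, -7, -2, 7,
        2]), (8, [3, -4, -2, 2, -1, 1, -1, 1, -1, 1, -2, -10, 4]),
      (10, [2, -1, 1, -1, 1, 3, -1, 1, -30]),
      (11, [1, -1, 1, -1, -1, -1, -2, -4, 1, 1, -5, -3, -1, -11, 2, -1, 1, -1, 3, -1, 12, -3, -1,
        -13, -11]), (13, [1, -13, 1, -1, 1, -13, -1, 13, -1, 1, -1]),
      (17, [1, -1, 2, -2, -7, 1, 85]), (19, [1, -1, 2, 2, -5, -1, -133]),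
      (37, [1, -1, -3, -2, 32, 4, -4, 37, 1])]
  | 28 => [(9, [3, 3, 3, 1, -3, 1, -1, 1, -1, 1, -4, -21, 3]),
      (11, [1, -1, 1, -1, -4, 1, -2, 1, -3, -11, -1, 1, -1, 1, 18, 1, 2, 11, -1, 1, -19, -1, 1, -1,
        1, 11, 3, -1, 2, -1, 4, 1, -1, 1, -1]), (13, [1, -1, 1, -3, -1, 13, -1]),
      (15, [3, -5, -1, 1, -1, -15, -1]), (17, [1, -1, 1, 1, 6, -1, 16, -2, 23, -2, 4, -1, -51])]
  | 29 => [(8, [1, 8, 2, -8, -1, -1, 1, -1, 1, -1, 1, -1, 1, -1, 2, -1, 3, -1, 1, 5, 1, -1, 2, -1,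
        1, -1, 2, 10, -76]), (9, [1, -1, 1, -1, 1, -1, -4, 7, 5, 2, 2, -2, 1, -1, -36]),
      (10, [2, -15, -3, -1, -1, 1, -1, 1, -1, 18, -1, 2, 5]),
      (11, [1, -1, 1, -1, 15, 1, -7, 11, 1, -1, 16, -1, 1, -1, 1]),
      (12, [2, -2, 3, 1, 3, 1, -1, 1, -1, -2, -6]),
      (13, [1, -1, 1, -2, -1, -3, -9, -2, 1, 11, 2, 3, -1, -1, -52]), (14, [2, 7, -1, 1, -1]),
      (15, [3, -1, 1, -2, 1, -3, -5]), (17, [1, -1, 2, -1, -119])]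
  | 30 => [(11, [1, -1, 1, -1, 3, -2, -1, -1, -5, 11, 1]),
      (13, [1, -1, 1, -2, 3, -2, 1, 2, -5, -13, -1]), (17, [1, -1, 1, 2, -3, -1, 27, -2, 34]),
      (19, [1, -1, 2, -2, -2, 19, -1]), (41, [1, -1, -4, 5, 123])]
  | 31 => [(8, [7, -16, -1, 1, -1, 1, -4, 4, 1, -1, 1, -2, -1, 4, 1, 1, -1, 1, -1, 1, -1, 1, -1, 1,
        -1, 1, -1, 1, -1, 1, -1, 1, -22362217, 16, -2, -2, 1, -16, 1])]
  | _ => []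

theorem sndCoord_exceptionalWords : ∀ s ∈ List.range 32, ∀ e ∈ exceptionalWords s,
    e.2 ≠ [] ∧ (∀ m ∈ e.2, m ≠ 0) ∧ sndCoord (s / e.1 : ℚ) e.2 1 0 = 0 := by
  decide +kernel

-- For given `x` and `y` the divisor in `IsGoodTriple` is smallest near `z = y r / (r - x y s)`.
theorem exists_exceptionalWord_or_isGoodTriple : ∀ s ∈ List.range 32, ∀ r ∈ List.range 301,
    s.gcd r = 1 → s < 4 * r → (r ≤ 8 ∨ s ≤ 30 ∧ r ≤ 10 * s) →
      (∃ e ∈ exceptionalWords s, e.1 ∣ r) ∨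
        ∃ x ∈ List.range' 1 10, ∃ δ ∈ [0, 1, -1], ∃ y ∈ List.range' 1 6,
          IsGoodTriple s r x y (y * r / (r - x * y * s) + δ) := by
  decide +kernel

theorem hasTriangularWord_natCast_div {s r : ℕ} (hgcd : s.gcd r = 1) (hlt : s < 4 * r)
    (h : r ≤ 8 ∨ s ≤ 30 ∧ r ≤ 10 * s) : HasTriangularWord (s / r : ℚ) := by
  have hs : s ∈ List.range 32 := List.mem_range.mpr (by omega)
  have hr : r ∈ List.range 301 := List.mem_range.mpr (by omega)
  have hr0 : r ≠ 0 := by omega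
  rcases exists_exceptionalWord_or_isGoodTriple s hs r hr hgcd hlt h with
    ⟨e, he, her⟩ | ⟨x, -, δ, -, y, -, hxyz⟩
  · have he' : HasTriangularWord (s / e.1 : ℚ) := ⟨e.2, sndCoord_exceptionalWords s hs e he⟩
    exact he'.div_of_dvd her hr0
  · simpa using hxyz.hasTriangularWord (K := ℚ) (mod_cast hr0)

theorem stmt18 (s r : ℕ) (hs : 0 < s) (hr : 0 < r) (h4 : (s : ℚ) / (r : ℚ) < 4)
    (hgcd : Nat.gcd s r = 1) :
    (r ≤ 8 → IsRelationNumber ((s : ℂ) / (r : ℂ))) ∧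
      (s ≤ 30 → (1 : ℚ) / 10 ≤ (s : ℚ) / (r : ℚ) →
        IsRelationNumber ((s : ℂ) / (r : ℂ))) := by
  have hrQ : (0 : ℚ) < r := mod_cast hr
  have hlt : s < 4 * r := by
    rw [div_lt_iff₀ hrQ] at h4
    exact_mod_cast h4
  have isRelationNumber (h : r ≤ 8 ∨ s ≤ 30 ∧ r ≤ 10 * s) : IsRelationNumber (s / r : ℂ) := by
    simpa using ((hasTriangularWord_natCast_div hgcd hlt h).map (algebraMap ℚ ℂ)).isRelationNumber
  refine ⟨fun hr8 ↦ isRelationNumber (.inl hr8), fun hs30 hle ↦ isRelationNumber (.inr ⟨hs30, ?_⟩)⟩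
  have hle' : (r : ℚ) ≤ 10 * s := by
    rw [le_div_iff₀ hrQ] at hle
    linarith
  exact_mod_cast hle'
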